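/- Let n ≥ 1 and d ≥ 1 be integers, let q be a prime power whose characteristic is at least d(d−1)+1, and let δ ≥ 0. Let T be a nonempty finite set and H : T → 𝔽_q^n a function such that for every nonzero polynomial P ∈ 𝔽_q[x_1,…,x_n] of total degree at most 2d−1, the number of s ∈ T with P(H(s)) = 0 is at most δ·|T|. Let f ∈ 𝔽_q[x_1,…,x_n,y] be a polynomial of total degree at most d that is indecomposable over 𝔽_q. For (r,s) ∈ T×T, write a = (a_1,…,a_n) = H(r), b = (b_1,…,b_n) = H(s), and F_{r,s} = f(b_1·x + a_1·y, …, b_n·x + a_n·y, y) ∈ 𝔽_q[x,y]. Then the number of pairs (r,s) ∈ T×T for which F_{r,s} is indecomposable over 𝔽_q is at least (1 − 2^{d−1}·δ)·|T|². -/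

import Mathlib

open MvPolynomial

/-- A polynomial `f ∈ F[xᵢ : i ∈ σ]` is *decomposable* over `F` if `f = g(h)` for some
univariate `g ∈ F[z]` with `deg g ≥ 2` and some `h ∈ F[xᵢ : i ∈ σ]`. -/
def MvPolynomial.Decomposable {F : Type*} [CommSemiring F] {σ : Type*}
    (f : MvPolynomial σ F) : Prop :=
  ∃ (g : Polynomial F) (h : MvPolynomial σ F),
    2 ≤ g.natDegree ∧ f = Polynomial.aeval h g

/-- A polynomial is *indecomposable* over `F` if it is non-constant and not
decomposable over `F`. -/
def MvPolynomial.Indecomposable {F : Type*} [CommSemiring F] {σ : Type*}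
    (f : MvPolynomial σ F) : Prop :=
  0 < f.totalDegree ∧ ¬ f.Decomposable

namespace RPI

open Polynomial in
lemma geomSum_props {S : Type*} [CommRing S] {h k : S[X]} {e m : ℕ} (hm : 1 ≤ m)
    (hh : h.Monic) (hk : k.Monic) (hhe : h.natDegree = e) (hke : k.natDegree = e) :
    (∑ i ∈ Finset.range m, h ^ i * k ^ (m - 1 - i)).natDegree ≤ e * (m - 1) ∧
    (∑ i ∈ Finset.range m, h ^ i * k ^ (m - 1 - i)).coeff (e * (m - 1)) = (m : S) := by
  have key : ∀ i ∈ Finset.range m, (h ^ i * k ^ (m - 1 - i)).natDegree = e * (m - 1) := by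
    intro i hi
    rw [Finset.mem_range] at hi
    rw [(hh.pow i).natDegree_mul (hk.pow _), hh.natDegree_pow, hk.natDegree_pow, hhe, hke,
      ← add_mul, mul_comm]
    congr 1
    omega
  constructor
  · apply Polynomial.natDegree_sum_le_of_forall_le
    intro i hi
    exact (key i hi).le
  · rw [Polynomial.finsetSum_coeff]
    rw [Finset.sum_congr rfl (g := fun _ => (1 : S))]
    · simp
    · intro i hi
      rw [← key i hi]
      exact ((hh.pow i).mul (hk.pow _)).coeff_natDegree

open Polynomial in
lemma root_unique {S : Type*} [CommRing S] [IsDomain S] {f h k : S[X]} {e m : ℕ} (hm : 1 ≤ m)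
    (hmS : (m : S) ≠ 0)
    (hh : h.Monic) (hk : k.Monic) (hhe : h.natDegree = e) (hke : k.natDegree = e)
    (h1 : (f - h ^ m).degree < (e * (m - 1) : ℕ)) (h2 : (f - k ^ m).degree < (e * (m - 1) : ℕ)) :
    h = k := by
  by_contra hne
  obtain ⟨-, hc⟩ := geomSum_props hm hh hk hhe hke
  have hQ := geom_sum₂_mul h k m
  have hd : (h ^ m - k ^ m).degree < (e * (m - 1) : ℕ) := by
    have : h ^ m - k ^ m = (f - k ^ m) - (f - h ^ m) := by ring
    rw [this]
    exact (Polynomial.degree_sub_le _ _).trans_lt (max_lt h2 h1)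
  rw [← hQ, Polynomial.degree_mul] at hd
  have h3 : ((e * (m - 1) : ℕ) : WithBot ℕ) ≤
      (∑ i ∈ Finset.range m, h ^ i * k ^ (m - 1 - i)).degree := by
    apply Polynomial.le_degree_of_ne_zero
    rw [hc]; exact hmS
  have h4 : (0 : WithBot ℕ) ≤ (h - k).degree := Polynomial.zero_le_degree_iff.2 (sub_ne_zero.2 hne)
  exact absurd hd (not_lt.2 (h3.trans (le_add_of_nonneg_right h4)))

/-- Weighted degree bound. -/
def Wt {K : Type*} [Field K] {σ : Type*} (N : ℕ) (p : Polynomial (MvPolynomial σ K)) : Prop :=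
  ((optionEquivLeft K σ).symm p).totalDegree ≤ N

section
variable {K : Type*} [Field K] {σ : Type*}

lemma Wt.mono {N M : ℕ} {p : Polynomial (MvPolynomial σ K)} (h : Wt N p) (hNM : N ≤ M) : Wt M p :=
  le_trans h hNM

lemma Wt.add {N : ℕ} {p q : Polynomial (MvPolynomial σ K)} (hp : Wt N p) (hq : Wt N q) :
    Wt N (p + q) := by
  unfold Wt at *
  rw [map_add]
  exact (totalDegree_add _ _).trans (max_le hp hq)

lemma Wt.sub {N : ℕ} {p q : Polynomial (MvPolynomial σ K)} (hp : Wt N p) (hq : Wt N q) :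
    Wt N (p - q) := by
  unfold Wt at *
  rw [map_sub]
  exact (totalDegree_sub _ _).trans (max_le hp hq)

lemma Wt.mul {N M : ℕ} {p q : Polynomial (MvPolynomial σ K)} (hp : Wt N p) (hq : Wt M q) :
    Wt (N + M) (p * q) := by
  unfold Wt at *
  rw [map_mul]
  exact (totalDegree_mul _ _).trans (add_le_add hp hq)

lemma Wt.pow {N : ℕ} {p : Polynomial (MvPolynomial σ K)} (hp : Wt N p) (i : ℕ) :
    Wt (N * i) (p ^ i) := by
  unfold Wt at *
  rw [map_pow, mul_comm]
  exact (totalDegree_pow _ _).trans (Nat.mul_le_mul_left _ hp)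

lemma Wt.constC (c : K) : Wt 0 (Polynomial.C (C c : MvPolynomial σ K)) := by
  unfold Wt
  rw [optionEquivLeft_symm_C_C]
  simp

lemma Wt.varX : Wt 1 (Polynomial.X : Polynomial (MvPolynomial σ K)) := by
  unfold Wt
  rw [optionEquivLeft_symm_X]
  simp

lemma Wt.coefC (c : MvPolynomial σ K) : Wt c.totalDegree (Polynomial.C c) := by
  unfold Wt
  have : (optionEquivLeft K σ).symm (Polynomial.C c) = rename some c := by
    induction c using MvPolynomial.induction_on with
    | C a => rw [optionEquivLeft_symm_C_C]; simp
    | add p q hp hq => simp [hp, hq]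
    | mul_X p i hp =>
      rw [Polynomial.C_mul, map_mul, hp, optionEquivLeft_symm_C_X]; simp
  rw [this]
  exact totalDegree_rename_le _ _

lemma Wt.natDegree_le {N : ℕ} {p : Polynomial (MvPolynomial σ K)} (h : Wt N p) :
    p.natDegree ≤ N := by
  have := natDegree_optionEquivLeft (R := K) ((optionEquivLeft K σ).symm p)
  rw [AlgEquiv.apply_symm_apply] at this
  rw [this]
  exact (degreeOf_le_totalDegree _ _).trans h

lemma Wt.coeff {N : ℕ} {p : Polynomial (MvPolynomial σ K)} (h : Wt N p) {j : ℕ} (hj : j ≤ N) :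
    (p.coeff j).totalDegree + j ≤ N := by
  by_cases hj' : j ≤ ((optionEquivLeft K σ).symm p).totalDegree
  · have := totalDegree_coeff_optionEquivLeft_add_le K σ ((optionEquivLeft K σ).symm p) j hj'
    rw [AlgEquiv.apply_symm_apply] at this
    exact this.trans h
  · have h1 : Wt ((optionEquivLeft K σ).symm p).totalDegree p := le_refl _
    have := h1.natDegree_le
    rw [Polynomial.coeff_eq_zero_of_natDegree_lt (by omega)]
    simpa using hj

lemma exists_root {m e : ℕ} (hm : 1 ≤ m) (hmK : (m : K) ≠ 0)
    {f : Polynomial (MvPolynomial σ K)} (hf : f.Monic) (hdeg : f.natDegree = e * m)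
    (hw : Wt (e * m) f) :
    ∃ h : Polynomial (MvPolynomial σ K), h.Monic ∧ h.natDegree = e ∧ Wt e h ∧
      (f - h ^ m).degree < (e * (m - 1) : ℕ) := by
  obtain ⟨m, rfl⟩ : ∃ m', m = m' + 1 := ⟨m - 1, by omega⟩
  have main : ∀ k ≤ e, ∃ h : Polynomial (MvPolynomial σ K), h.Monic ∧ h.natDegree = e ∧ Wt e h ∧
      (f - h ^ (m + 1)).degree < (e * (m + 1) - k : ℕ) := by
    intro k
    induction k with
    | zero =>
      intro _
      refine ⟨Polynomial.X ^ e, Polynomial.monic_X_pow e, Polynomial.natDegree_X_pow e, ?_, ?_⟩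
      · simpa using (Wt.varX (K := K) (σ := σ)).pow e
      · have h0 : ((Polynomial.X : Polynomial (MvPolynomial σ K)) ^ e) ^ (m + 1)
            = Polynomial.X ^ (e * (m + 1)) := by rw [pow_mul]
        rw [h0]
        have h1 : f.degree = (e * (m + 1) : ℕ) := by
          rw [← hdeg]; exact Polynomial.degree_eq_natDegree hf.ne_zero
        rw [Nat.sub_zero]
        calc _ < f.degree := by
              apply Polynomial.degree_sub_lt_left
              · rw [h1, Polynomial.degree_X_pow]
              · exact hf.ne_zero
              · rw [hf.leadingCoeff, (Polynomial.monic_X_pow _).leadingCoeff]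
          _ = _ := h1
    | succ k ih =>
      intro hk
      obtain ⟨h, hh, hhe, hwh, hd⟩ := ih (by omega)
      set j := e - (k + 1) with hj
      have hN : e * (m + 1) - (k + 1) = j + e * m := by
        rw [mul_add, mul_one]; omega
      set c : MvPolynomial σ K := C (((m + 1 : ℕ) : K)⁻¹) *
        (f - h ^ (m + 1)).coeff (j + e * m) with hc
      have hcm : c * ((m + 1 : ℕ) : MvPolynomial σ K) = (f - h ^ (m + 1)).coeff (j + e * m) := by
        have : ((m + 1 : ℕ) : MvPolynomial σ K) = C ((m + 1 : ℕ) : K) := by simp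
        rw [hc, this, mul_right_comm, ← C_mul, inv_mul_cancel₀ hmK, C_1, one_mul]
      have hwd : Wt (e * (m + 1)) (f - h ^ (m + 1)) := hw.sub (hwh.pow _)
      have hctd : c.totalDegree + j ≤ e := by
        have h1 := hwd.coeff (j := j + e * m) (by rw [← hN]; omega)
        have h2 : c.totalDegree ≤ ((f - h ^ (m + 1)).coeff (j + e * m)).totalDegree := by
          refine (totalDegree_mul _ _).trans ?_
          simp
        rw [mul_add, mul_one] at h1
        omega
      have hwt : Wt e (Polynomial.C c * Polynomial.X ^ j) := by
        refine Wt.mono ((Wt.coefC c).mul ((Wt.varX).pow j)) ?_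
        rw [one_mul]; exact hctd
      have hlt : (Polynomial.C c * Polynomial.X ^ j).degree < h.degree := by
        rw [Polynomial.degree_eq_natDegree hh.ne_zero, hhe]
        refine (Polynomial.degree_C_mul_X_pow_le _ _).trans_lt ?_
        exact_mod_cast (by omega : j < e)
      have hh' : (h + Polynomial.C c * Polynomial.X ^ j).Monic := hh.add_of_left hlt
      have hhe' : (h + Polynomial.C c * Polynomial.X ^ j).natDegree = e := by
        rw [← hhe]
        exact Polynomial.natDegree_eq_of_degree_eq (Polynomial.degree_add_eq_left_of_degree_lt hlt)
      refine ⟨h + Polynomial.C c * Polynomial.X ^ j, hh', hhe', hwh.add hwt, ?_⟩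
      obtain ⟨q1, q2⟩ := geomSum_props (m := m + 1) (by omega) hh' hh hhe' hhe
      have hQ := geom_sum₂_mul (h + Polynomial.C c * Polynomial.X ^ j) h (m + 1)
      set Q := ∑ i ∈ Finset.range (m + 1),
        (h + Polynomial.C c * Polynomial.X ^ j) ^ i * h ^ (m + 1 - 1 - i) with hQdef
      rw [add_sub_cancel_left] at hQ
      rw [Nat.add_sub_cancel] at q1 q2
      have hsplit : f - (h + Polynomial.C c * Polynomial.X ^ j) ^ (m + 1)
          = (f - h ^ (m + 1)) - (Polynomial.C c * Q) * Polynomial.X ^ j := by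
        linear_combination hQ
      rw [hsplit, Polynomial.degree_lt_iff_coeff_zero, hN]
      intro i hi
      rw [Polynomial.coeff_sub]
      obtain ⟨i', rfl⟩ : ∃ i', i = i' + j := ⟨i - j, by omega⟩
      rw [Polynomial.coeff_mul_X_pow, Polynomial.coeff_C_mul]
      rcases Nat.lt_or_ge (e * m) i' with hlt2 | hle
      · rw [Polynomial.coeff_eq_zero_of_natDegree_lt (q1.trans_lt hlt2), mul_zero, sub_zero]
        apply Polynomial.coeff_eq_zero_of_degree_lt
        refine hd.trans_le ?_
        exact_mod_cast (by omega : e * (m + 1) - k ≤ i' + j)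
      · have : i' = e * m := by omega
        subst this
        rw [q2, hcm, add_comm j, sub_self]
  obtain ⟨h, h1, h2, h3, h4⟩ := main e le_rfl
  refine ⟨h, h1, h2, h3, ?_⟩
  rw [Nat.add_sub_cancel]
  have : e * (m + 1) - e = e * m := by rw [mul_add, mul_one]; omega
  rwa [this] at h4

lemma exists_expansion {e D : ℕ} {h : Polynomial (MvPolynomial σ K)} (hh : h.Monic)
    (hhe : h.natDegree = e) (hwh : Wt e h) :
    ∀ (N : ℕ) (r : Polynomial (MvPolynomial σ K)), r.degree < (N : ℕ) → Wt D r →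
    ∃ g : Polynomial K, r = Polynomial.aeval h g ∨
      (r - Polynomial.aeval h g ≠ 0 ∧ Wt D (r - Polynomial.aeval h g) ∧
        (¬ e ∣ (r - Polynomial.aeval h g).natDegree ∨
          ¬ ∃ c : K, (r - Polynomial.aeval h g).leadingCoeff = C c)) := by
  intro N
  induction N with
  | zero =>
    intro r hr _
    refine ⟨0, Or.inl ?_⟩
    rw [map_zero]
    exact Polynomial.degree_lt_iff_coeff_zero _ _ |>.1 hr |> fun h => Polynomial.ext (by simpa using h)
  | succ N ih =>
    intro r hr hw
    by_cases hr0 : r = 0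
    · exact ⟨0, Or.inl (by simp [hr0])⟩
    by_cases hcase : e ∣ r.natDegree ∧ ∃ c : K, r.leadingCoeff = C c
    · obtain ⟨⟨i, hi⟩, c, hc⟩ := hcase
      have hc0 : c ≠ 0 := by
        rintro rfl
        rw [C_0, Polynomial.leadingCoeff_eq_zero] at hc
        exact hr0 hc
      have hCc : (C c : MvPolynomial σ K) ≠ 0 := by simpa using hc0
      have hnd : (Polynomial.C (C c : MvPolynomial σ K) * h ^ i).degree = r.degree := by
        rw [Polynomial.degree_C_mul hCc, Polynomial.degree_eq_natDegree (hh.pow i).ne_zero,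
          hh.natDegree_pow, hhe, Polynomial.degree_eq_natDegree hr0, hi, mul_comm]
      have hlt : (r - Polynomial.C (C c : MvPolynomial σ K) * h ^ i).degree < r.degree := by
        apply Polynomial.degree_sub_lt_left hnd.symm hr0
        rw [Polynomial.leadingCoeff_mul, (hh.pow i).leadingCoeff, hc]
        simp
      have hle : r.natDegree ≤ N := by
        rw [Polynomial.degree_eq_natDegree hr0] at hr
        have : r.natDegree < N + 1 := by exact_mod_cast hr
        omega
      obtain ⟨g, hg⟩ := ih (r - Polynomial.C (C c) * h ^ i) (by
          refine hlt.trans_le ?_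
          rw [Polynomial.degree_eq_natDegree hr0]
          exact_mod_cast hle) (by
          refine hw.sub (Wt.mono ((Wt.constC c).mul (hwh.pow i)) ?_)
          rw [zero_add, ← hi]
          exact hw.natDegree_le)
      refine ⟨g + Polynomial.C c * Polynomial.X ^ i, ?_⟩
      have hev : Polynomial.aeval h (g + Polynomial.C c * Polynomial.X ^ i)
          = Polynomial.aeval h g + Polynomial.C (C c) * h ^ i := by
        rw [map_add, map_mul, map_pow, Polynomial.aeval_X, Polynomial.aeval_C]
        rfl
      have hev2 : r - (Polynomial.aeval h g + Polynomial.C (C c) * h ^ i)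
          = r - Polynomial.C (C c) * h ^ i - Polynomial.aeval h g := by ring
      rw [hev, hev2]
      rcases hg with hg | hg
      · left; rw [← hg]; ring
      · right; exact hg
    · refine ⟨0, Or.inr ?_⟩
      rw [map_zero, sub_zero]
      exact ⟨hr0, hw, by tauto⟩

end

section
variable {K : Type*} [Field K] {S : Type*} [CommRing S] [Algebra K S]

lemma aeval_eq_comp (H : Polynomial S) (W : Polynomial K) :
    Polynomial.aeval H W = (W.map (algebraMap K S)).comp H := by
  rw [Polynomial.comp_eq_aeval, Polynomial.aeval_map_algebraMap]

lemma natDegree_aeval [IsDomain S] (H : Polynomial S) (W : Polynomial K) :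
    (Polynomial.aeval H W).natDegree = W.natDegree * H.natDegree := by
  rw [aeval_eq_comp, Polynomial.natDegree_comp, Polynomial.natDegree_map]

lemma leadingCoeff_aeval [IsDomain S] (H : Polynomial S) (W : Polynomial K) (h : H.natDegree ≠ 0) :
    (Polynomial.aeval H W).leadingCoeff =
      algebraMap K S W.leadingCoeff * H.leadingCoeff ^ W.natDegree := by
  rw [aeval_eq_comp, Polynomial.leadingCoeff_comp h, Polynomial.natDegree_map,
    Polynomial.leadingCoeff_map]
end

section
variable {K : Type*} [Field K]
open Polynomial

lemma decomp_normalize {f k : K[X][X]} {G : K[X]} {m : ℕ} (hf : f.Monic) (hD : f.natDegree ≠ 0)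
    (hG : G.natDegree = m) (hfG : f = Polynomial.aeval k G) :
    ∃ (e : ℕ) (k1 : K[X][X]) (G1 : K[X]), f.natDegree = e * m ∧ 1 ≤ e ∧ k1.Monic ∧
      k1.natDegree = e ∧ G1.Monic ∧ G1.natDegree = m ∧ f = Polynomial.aeval k1 G1 := by
  have hnd := natDegree_aeval k G
  rw [← hfG, hG] at hnd
  have hk : k.natDegree ≠ 0 := by
    intro h; rw [h] at hnd; exact hD hnd
  have hm0 : m ≠ 0 := by
    rintro rfl; rw [zero_mul] at hnd; exact hD hnd
  have hlc := leadingCoeff_aeval k G hk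
  rw [← hfG, hf.leadingCoeff, hG] at hlc
  have hu : IsUnit k.leadingCoeff := by
    have h1 : IsUnit (k.leadingCoeff ^ m) := IsUnit.of_mul_eq_one_right _ hlc.symm
    exact (isUnit_pow_iff hm0).1 h1
  obtain ⟨l, hl, hlk⟩ := Polynomial.isUnit_iff.1 hu
  have hl0 : l ≠ 0 := hl.ne_zero
  have e1 : (Polynomial.C (Polynomial.C l) : K[X][X]) * (Polynomial.C (Polynomial.C l⁻¹) * k) = k := by
    rw [← mul_assoc, ← Polynomial.C_mul, ← Polynomial.C_mul, mul_inv_cancel₀ hl0]; simp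
  have hmon : (Polynomial.C (Polynomial.C l⁻¹) * k).Monic := by
    rw [Monic, leadingCoeff_mul, leadingCoeff_C, ← hlk, ← Polynomial.C_mul, inv_mul_cancel₀ hl0, Polynomial.C_1]
  have hkd : (Polynomial.C (Polynomial.C l⁻¹) * k).natDegree = k.natDegree := by
    apply natDegree_C_mul
    simpa using hl0
  have hfG1 : f = Polynomial.aeval (Polynomial.C (Polynomial.C l⁻¹) * k) (G.comp (Polynomial.C l * Polynomial.X)) := by
    rw [aeval_comp, map_mul, Polynomial.aeval_X, Polynomial.aeval_C]
    rw [hfG]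
    congr 2
    exact e1.symm
  have hG1d : (G.comp (Polynomial.C l * Polynomial.X)).natDegree = m := by
    rw [natDegree_comp, natDegree_C_mul hl0, natDegree_X, mul_one, hG]
  refine ⟨k.natDegree, Polynomial.C (Polynomial.C l⁻¹) * k, G.comp (Polynomial.C l * Polynomial.X), by rw [hnd, mul_comm], by omega, hmon,
    hkd, ?_, hG1d, hfG1⟩
  have := leadingCoeff_aeval (Polynomial.C (Polynomial.C l⁻¹) * k) (G.comp (Polynomial.C l * Polynomial.X)) (by rw [hkd]; exact hk)
  rw [← hfG1, hf.leadingCoeff, hmon.leadingCoeff, one_pow, mul_one] at this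
  have h3 : (Polynomial.C (1 : K)) = Polynomial.C (G.comp (Polynomial.C l * Polynomial.X)).leadingCoeff := by
    rw [Polynomial.C_1]; exact this
  exact (Polynomial.C_injective h3).symm

/-- With the root normalized: `f = G(k)` is turned into `f = W(h)` where `h` is the given
approximate root. -/
lemma decomp_via_root {f h k : K[X][X]} {G : K[X]} {m e : ℕ} (hm : 2 ≤ m) (hmK : (m : K) ≠ 0)
    (he : 1 ≤ e)
    (hk : k.Monic) (hke : k.natDegree = e) (hG : G.Monic) (hGm : G.natDegree = m)
    (hfG : f = Polynomial.aeval k G) (hh : h.Monic) (hhe : h.natDegree = e)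
    (hroot : (f - h ^ m).degree < (e * (m - 1) : ℕ)) :
    ∃ W : K[X], f = Polynomial.aeval h W := by
  set s : K := G.coeff (m - 1) / m with hs
  have hdeg : (G - (Polynomial.X + Polynomial.C s) ^ m).degree < ((m - 1 : ℕ) : WithBot ℕ) := by
    rw [degree_lt_iff_coeff_zero]
    intro i hi
    rw [Polynomial.coeff_sub, Polynomial.coeff_X_add_C_pow]
    rcases Nat.lt_or_ge m i with h1 | h1
    · rw [coeff_eq_zero_of_natDegree_lt (by omega), Nat.choose_eq_zero_of_lt h1]; simp
    · rcases Nat.lt_or_ge i m with h2 | h2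
      · obtain rfl : i = m - 1 := by omega
        have h3 : m - (m - 1) = 1 := by omega
        have h4 : m.choose (m - 1) = m := by
          rw [← Nat.choose_symm (by omega : m - 1 ≤ m), h3, Nat.choose_one_right]
        rw [h3, h4, hs, pow_one, div_mul_cancel₀ _ hmK, sub_self]
      · obtain rfl : i = m := by omega
        have : G.coeff i = 1 := by rw [← hGm]; exact hG.coeff_natDegree
        rw [this]; simp
  have hks : (k + Polynomial.C (Polynomial.C s)).Monic := by
    apply hk.add_of_left
    rw [degree_eq_natDegree hk.ne_zero, hke]
    refine degree_C_le.trans_lt ?_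
    exact_mod_cast he
  have hksd : (k + Polynomial.C (Polynomial.C s)).natDegree = e := by
    rw [natDegree_add_C, hke]
  have hev : f - (k + Polynomial.C (Polynomial.C s)) ^ m = Polynomial.aeval k (G - (Polynomial.X + Polynomial.C s) ^ m) := by
    rw [map_sub, map_pow, map_add, Polynomial.aeval_X, Polynomial.aeval_C, hfG]; rfl
  have hroot2 : (f - (k + Polynomial.C (Polynomial.C s)) ^ m).degree < (e * (m - 1) : ℕ) := by
    rw [hev]
    by_cases h0 : G - (Polynomial.X + Polynomial.C s) ^ m = 0
    · rw [h0, map_zero, degree_zero]; exact WithBot.bot_lt_coe _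
    · refine degree_le_natDegree.trans_lt ?_
      rw [natDegree_aeval, hke]
      rw [degree_eq_natDegree h0] at hdeg
      have h5 : (G - (Polynomial.X + Polynomial.C s) ^ m).natDegree < m - 1 := by exact_mod_cast hdeg
      have : (G - (Polynomial.X + Polynomial.C s) ^ m).natDegree * e < e * (m - 1) := by
        rw [mul_comm e]; exact Nat.mul_lt_mul_of_pos_right h5 he
      exact_mod_cast this
  have hmS : ((m : ℕ) : K[X]) ≠ 0 := by
    rw [← Polynomial.C_eq_natCast]; exact Polynomial.C_ne_zero.2 hmK
  have heq : h = k + Polynomial.C (Polynomial.C s) := root_unique (by omega) hmS hh hks hhe hksd hroot hroot2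
  refine ⟨G.comp (Polynomial.X - Polynomial.C s), ?_⟩
  rw [aeval_comp, map_sub, Polynomial.aeval_X, Polynomial.aeval_C, hfG, heq]
  congr 1
  have : (algebraMap K K[X][X]) s = Polynomial.C (Polynomial.C s) := rfl
  rw [this, add_sub_cancel_right]
end

section
variable {K : Type*} [Field K] {σ : Type*}

lemma coeff_line (b : σ → K) (p : MvPolynomial σ K) (k : ℕ) :
    (aeval (fun i => Polynomial.C (b i) * (Polynomial.X : Polynomial K)) p).coeff k
      = eval b (homogeneousComponent k p) := by
  classical
  induction p using MvPolynomial.induction_on' with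
  | monomial m c =>
    have h1 : aeval (fun i => Polynomial.C (b i) * (Polynomial.X : Polynomial K)) (monomial m c)
        = Polynomial.C (eval b (monomial m c)) * Polynomial.X ^ m.degree := by
      rw [aeval_monomial, eval_monomial, Finsupp.prod, Finsupp.prod]
      simp only [mul_pow, Finset.prod_mul_distrib, Finset.prod_pow_eq_pow_sum]
      rw [Polynomial.C_mul, map_prod, mul_assoc]
      simp only [Polynomial.C_pow]
      rfl
    rw [h1, Polynomial.coeff_C_mul, Polynomial.coeff_X_pow]
    have hm : (monomial m c) ∈ homogeneousSubmodule σ K m.degree := by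
      rw [mem_homogeneousSubmodule]
      exact isHomogeneous_monomial c rfl
    rw [homogeneousComponent_of_mem hm]
    by_cases h : k = m.degree
    · simp [h]
    · simp [h]
  | add p q hp hq => rw [map_add, Polynomial.coeff_add, hp, hq, map_add, map_add]

lemma totalDegree_aeval_le {τ : Type*} (v : σ → MvPolynomial τ K) (hv : ∀ i, (v i).totalDegree ≤ 1)
    (p : MvPolynomial σ K) : (aeval v p).totalDegree ≤ p.totalDegree := by
  rw [aeval_def, eval₂_eq]
  refine totalDegree_finsetSum_le ?_
  intro m hm
  refine (totalDegree_mul _ _).trans ?_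
  rw [algebraMap_eq, totalDegree_C, zero_add]
  refine (totalDegree_finsetProd _ _).trans ?_
  refine le_trans ?_ (le_totalDegree hm)
  refine Finset.sum_le_sum fun i _ => ?_
  refine (totalDegree_pow _ _).trans ?_
  exact (Nat.mul_le_mul_left _ (hv i)).trans (by rw [mul_one])

/-- The shear substitution. -/
noncomputable def shear (a : σ → K) : MvPolynomial (Option σ) K →ₐ[K] MvPolynomial (Option σ) K :=
  aeval (fun v => v.elim (X none) (fun i => X (some i) + C (a i) * X none))

lemma shear_totalDegree (a : σ → K) (f : MvPolynomial (Option σ) K) :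
    (shear a f).totalDegree ≤ f.totalDegree := by
  refine totalDegree_aeval_le _ ?_ f
  rintro (_ | i)
  · simp
  · refine (totalDegree_add _ _).trans (max_le (by simp) ?_)
    refine (totalDegree_mul _ _).trans (by simp)

lemma shear_neg (a : σ → K) (f : MvPolynomial (Option σ) K) : shear (-a) (shear a f) = f := by
  have : (shear (-a)).comp (shear a) = AlgHom.id K (MvPolynomial (Option σ) K) := by
    apply MvPolynomial.algHom_ext
    rintro (_ | i)
    · simp [shear]
    · simp [shear]
  exact DFunLike.congr_fun this f

/-- top coefficient -/
noncomputable def topc (a : σ → K) (f : MvPolynomial (Option σ) K) : K :=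
  eval (fun v : Option σ => v.elim 1 a) (homogeneousComponent f.totalDegree f)

lemma shear_wt (a : σ → K) (f : MvPolynomial (Option σ) K) :
    Wt f.totalDegree (optionEquivLeft K σ (shear a f)) := by
  unfold Wt
  rw [AlgEquiv.symm_apply_apply]
  exact shear_totalDegree a f

lemma shear_coeff (a : σ → K) (f : MvPolynomial (Option σ) K) :
    (optionEquivLeft K σ (shear a f)).coeff f.totalDegree = C (topc a f) := by
  have h0 := (shear_wt a f).coeff le_rfl
  have h1 : ((optionEquivLeft K σ (shear a f)).coeff f.totalDegree).totalDegree = 0 := by omega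
  rw [totalDegree_eq_zero_iff_eq_C] at h1
  have h2 : (Polynomial.mapAlgHom (aeval (fun _ : σ => (0 : K)))).comp
      ((optionEquivLeft K σ).toAlgHom.comp (shear a)) =
      aeval (fun v : Option σ => Polynomial.C (v.elim 1 a) * (Polynomial.X : Polynomial K)) := by
    apply MvPolynomial.algHom_ext
    rintro (_ | i)
    · simp [shear, optionEquivLeft_X_none]
    · simp [shear, optionEquivLeft_X_none, optionEquivLeft_X_some, optionEquivLeft_C]
  have h3 := DFunLike.congr_fun h2 f
  have h4 := congrArg (fun p => Polynomial.coeff p f.totalDegree) h3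
  simp only [coeff_line] at h4
  have h5 : aeval (fun _ : σ => (0 : K))
      ((optionEquivLeft K σ (shear a f)).coeff f.totalDegree) = topc a f := by
    rw [topc, ← h4]
    simp
  rw [h1] at h5 ⊢
  rw [aeval_C] at h5
  rw [← h5]; rfl

/-- substitution from two variables to iterated polynomials -/
noncomputable def psi : MvPolynomial (Fin 2) K →ₐ[K] Polynomial (Polynomial K) :=
  aeval ![Polynomial.C Polynomial.X, Polynomial.X]

/-- restriction of coefficients to a line -/
noncomputable def line (b : σ → K) : MvPolynomial σ K →ₐ[K] Polynomial K :=
  aeval (fun i => Polynomial.C (b i) * (Polynomial.X : Polynomial K))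

/-- restriction to a plane -/
noncomputable def plane (a b : σ → K) : MvPolynomial (Option σ) K →ₐ[K] MvPolynomial (Fin 2) K :=
  aeval (fun v : Option σ => v.elim (X 1) (fun i => C (b i) * X 0 + C (a i) * X 1))

lemma psi_plane (a b : σ → K) (f : MvPolynomial (Option σ) K) :
    psi (plane a b f) =
      Polynomial.mapAlgHom (line b) (optionEquivLeft K σ (shear a f)) := by
  have h2 : (psi (K := K)).comp (plane a b) = (Polynomial.mapAlgHom (line b)).comp
      ((optionEquivLeft K σ).toAlgHom.comp (shear a)) := by
    apply MvPolynomial.algHom_ext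
    rintro (_ | i)
    · simp [shear, plane, psi, optionEquivLeft_X_none]
    · simp [shear, plane, psi, line, optionEquivLeft_X_none, optionEquivLeft_X_some,
        optionEquivLeft_C]
  exact DFunLike.congr_fun h2 f

lemma det_main (a : σ → K) (f : MvPolynomial (Option σ) K) (hD : 0 < f.totalDegree)
    (hind : ¬ f.Decomposable) (hu : topc a f ≠ 0) (m : ℕ) (hm : 2 ≤ m) (hmK : (m : K) ≠ 0) :
    ∃ P : MvPolynomial σ K, P ≠ 0 ∧ P.totalDegree ≤ f.totalDegree ∧
      ∀ b : σ → K, eval b P ≠ 0 → ∀ (G : Polynomial K) (k : MvPolynomial (Fin 2) K),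
        G.natDegree = m → plane a b f ≠ Polynomial.aeval k G := by
  classical
  set D := f.totalDegree with hDdef
  set u := topc a f with hudef
  set f1 : Polynomial (MvPolynomial σ K) :=
    Polynomial.C (C u⁻¹) * optionEquivLeft K σ (shear a f) with hf1
  have hw : Wt D f1 := by
    simpa using (Wt.constC (σ := σ) u⁻¹).mul (shear_wt a f)
  have hc1 : f1.coeff D = 1 := by
    rw [hf1, Polynomial.coeff_C_mul, shear_coeff, ← C_mul, inv_mul_cancel₀ hu, C_1]
  have hnd : f1.natDegree = D :=
    le_antisymm hw.natDegree_le (Polynomial.le_natDegree_of_ne_zero (by rw [hc1]; exact one_ne_zero))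
  have hmon : f1.Monic := by
    rw [Polynomial.Monic, Polynomial.leadingCoeff, hnd, hc1]
  -- properties of the restricted polynomial
  have hres : ∀ (b : σ → K) (G : Polynomial K) (k : MvPolynomial (Fin 2) K), G.natDegree = m →
      plane a b f = Polynomial.aeval k G →
      f1.map (line b).toRingHom = Polynomial.aeval (psi k) (Polynomial.C u⁻¹ * G) := by
    intro b G k _ hk
    have h1 := psi_plane a b f
    rw [hk, ← Polynomial.aeval_algHom_apply] at h1
    have h2 : Polynomial.mapAlgHom (line b) f1 = f1.map (line b).toRingHom := rfl
    rw [← h2, hf1, map_mul, ← h1, map_mul, Polynomial.aeval_C]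
    congr 1
    simp [line]
  by_cases hdvd : m ∣ D
  swap
  · refine ⟨1, one_ne_zero, by simp, ?_⟩
    intro b _ G k hG hk
    have h1 := hres b G k hG hk
    have hG' : (Polynomial.C u⁻¹ * G).natDegree = m := by
      rw [Polynomial.natDegree_C_mul (inv_ne_zero hu), hG]
    obtain ⟨e, _, _, he, -⟩ := decomp_normalize (hmon.map (line b).toRingHom)
      (by rw [hmon.natDegree_map, hnd]; exact hD.ne') hG' h1
    rw [hmon.natDegree_map, hnd] at he
    exact hdvd ⟨e, by rw [he, mul_comm]⟩
  obtain ⟨e, he⟩ := hdvd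
  rw [mul_comm] at he
  have he1 : 1 ≤ e := by
    rcases Nat.eq_zero_or_pos e with h | h
    · rw [h, zero_mul] at he; omega
    · exact h
  obtain ⟨h, hh, hhe, hwh, hroot⟩ := exists_root (m := m) (e := e) (by omega) hmK hmon
    (hnd.trans he) (he ▸ hw)
  obtain ⟨g, hg⟩ := exists_expansion (D := D) hh hhe hwh (e * (m - 1)) (f1 - h ^ m) hroot
    (hw.sub (he ▸ hwh.pow m))
  have hsub : f1 - h ^ m - Polynomial.aeval h g = f1 - Polynomial.aeval h (Polynomial.X ^ m + g) := by
    rw [map_add, map_pow, Polynomial.aeval_X]; ring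
  -- the remainder is nonzero
  rcases hg with hg | ⟨ht0, hwt, hbad⟩
  · exfalso
    apply hind
    have h1 : f1 = Polynomial.aeval h (Polynomial.X ^ m + g) := by
      rw [← sub_eq_zero, ← hsub, hg, sub_self]
    have h2 : (Polynomial.X ^ m + g).natDegree = m := by
      have := natDegree_aeval h (Polynomial.X ^ m + g)
      rw [← h1, hnd, hhe, he, mul_comm] at this
      exact (Nat.eq_of_mul_eq_mul_right he1 this).symm
    refine ⟨Polynomial.C u * (Polynomial.X ^ m + g), shear (-a) ((optionEquivLeft K σ).symm h),
      ?_, ?_⟩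
    · rw [Polynomial.natDegree_C_mul hu, h2]; exact hm
    · have h3 : optionEquivLeft K σ (shear a f) =
          Polynomial.aeval h (Polynomial.C u * (Polynomial.X ^ m + g)) := by
        rw [map_mul, ← h1, Polynomial.aeval_C, hf1]
        have : (algebraMap K (Polynomial (MvPolynomial σ K))) u = Polynomial.C (C u) := rfl
        rw [this, ← mul_assoc, ← Polynomial.C_mul, ← C_mul, mul_inv_cancel₀ hu]
        simp
      rw [Polynomial.aeval_algHom_apply]
      have h4 : shear a f = (optionEquivLeft K σ).symm (optionEquivLeft K σ (shear a f)) := by simp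
      rw [h3, ← Polynomial.aeval_algHom_apply] at h4
      rw [← h4, shear_neg]
  · set t := f1 - h ^ m - Polynomial.aeval h g with ht
    set l := t.leadingCoeff with hl
    have hl0 : l ≠ 0 := Polynomial.leadingCoeff_ne_zero.2 ht0
    have hld : l.totalDegree ≤ D := by
      have := hwt.coeff hwt.natDegree_le
      exact le_trans (Nat.le_add_right _ _) this
    -- key consequence of a decomposition
    have hkey : ∀ (b : σ → K) (G : Polynomial K) (k : MvPolynomial (Fin 2) K), G.natDegree = m →
        plane a b f = Polynomial.aeval k G → line b l ≠ 0 →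
        e ∣ t.natDegree ∧ ∃ c : K, line b l = Polynomial.C c := by
      intro b G k hG hk hlb
      have h1 := hres b G k hG hk
      have hG' : (Polynomial.C u⁻¹ * G).natDegree = m := by
        rw [Polynomial.natDegree_C_mul (inv_ne_zero hu), hG]
      obtain ⟨e', k1, G1, he', he1', hk1, hke, hG1, hG1m, hfG⟩ :=
        decomp_normalize (hmon.map (line b).toRingHom)
        (by rw [hmon.natDegree_map, hnd]; exact hD.ne') hG' h1
      rw [hmon.natDegree_map, hnd, he] at he'
      obtain rfl : e = e' := Nat.eq_of_mul_eq_mul_right (by omega) he'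
      have hroot' : (f1.map (line b).toRingHom - (h.map (line b).toRingHom) ^ m).degree
          < (e * (m - 1) : ℕ) := by
        rw [← Polynomial.map_pow, ← Polynomial.map_sub]
        exact Polynomial.degree_map_le.trans_lt hroot
      have hhe' : (h.map (line b).toRingHom).natDegree = e := by rw [hh.natDegree_map, hhe]
      obtain ⟨W, hW⟩ := decomp_via_root hm hmK he1 hk1 hke hG1 hG1m hfG
        (hh.map (line b).toRingHom) hhe' hroot'
      have htW : t.map (line b).toRingHom =
          Polynomial.aeval (h.map (line b).toRingHom) (W - (Polynomial.X ^ m + g)) := by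
        have h5 : t.map (line b).toRingHom = Polynomial.mapAlgHom (line b) t := rfl
        have h6 : h.map (line b).toRingHom = Polynomial.mapAlgHom (line b) h := rfl
        have h7 : f1.map (line b).toRingHom = Polynomial.mapAlgHom (line b) f1 := rfl
        rw [map_sub, ← hW, h5, hsub, map_sub, h6, h7, Polynomial.aeval_algHom_apply]
      have hd1 : (t.map (line b).toRingHom).natDegree = t.natDegree :=
        Polynomial.natDegree_map_of_leadingCoeff_ne_zero _ hlb
      have hl1 : (t.map (line b).toRingHom).leadingCoeff = line b l :=
        Polynomial.leadingCoeff_map_of_leadingCoeff_ne_zero _ hlb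
      constructor
      · rw [← hd1, htW, natDegree_aeval, hhe']
        exact Dvd.intro_left _ rfl
      · rw [← hl1, htW, leadingCoeff_aeval _ _ (by omega),
          (hh.map (line b).toRingHom).leadingCoeff, one_pow, mul_one]
        exact ⟨_, rfl⟩
    by_cases hlc : l.totalDegree = 0
    · refine ⟨1, one_ne_zero, by simp, ?_⟩
      intro b _ G k hG hk
      rw [totalDegree_eq_zero_iff_eq_C] at hlc
      have hlb : line b l ≠ 0 := by
        rw [hlc] at hl0 ⊢
        rw [← algebraMap_eq, AlgHom.commutes]
        intro h0
        apply hl0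
        have : coeff 0 l = 0 := by simpa using h0
        rw [this, C_0]
      rcases hbad with hb | hb
      · exact hb (hkey b G k hG hk hlb).1
      · exact hb ⟨_, hlc⟩
    · refine ⟨homogeneousComponent l.totalDegree l, ?_, ?_, ?_⟩
      · intro h0
        obtain ⟨s, hs, hs'⟩ : ∃ s ∈ l.support, (s.sum fun _ e => e) = l.totalDegree := by
          obtain ⟨s, hs, h2⟩ := Finset.exists_mem_eq_sup l.support
            (MvPolynomial.support_nonempty.2 hl0) (fun s => s.sum fun _ e => e)
          exact ⟨s, hs, h2.symm⟩
        have := congrArg (coeff s) h0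
        rw [coeff_homogeneousComponent, if_pos (by rw [← hs']; rfl), coeff_zero] at this
        exact (mem_support_iff.1 hs) this
      · exact (homogeneousComponent_isHomogeneous _ _).totalDegree_le.trans hld
      · intro b hb G k hG hk
        have hcb : (line b l).coeff l.totalDegree ≠ 0 := by
          rw [line, coeff_line]; exact hb
        have hlb : line b l ≠ 0 := by
          intro h0; rw [h0] at hcb; simp at hcb
        obtain ⟨c, hc⟩ := (hkey b G k hG hk hlb).2
        rw [hc, Polynomial.coeff_C, if_neg hlc] at hcb
        exact hcb rfl

/-- The polynomial controlling the choice of `a`. -/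
lemma exists_topPoly (f : MvPolynomial (Option σ) K) (hf : f ≠ 0) :
    ∃ P : MvPolynomial σ K, P ≠ 0 ∧ P.totalDegree ≤ f.totalDegree ∧
      ∀ a, eval a P = topc a f := by
  classical
  set q := homogeneousComponent f.totalDegree f with hq
  refine ⟨aeval (fun v : Option σ => v.elim 1 X) q, ?_, ?_, ?_⟩
  · obtain ⟨s, hs, hs'⟩ : ∃ s ∈ f.support, (s.sum fun _ e => e) = f.totalDegree := by
      obtain ⟨s, hs, h2⟩ := Finset.exists_mem_eq_sup f.support
        (MvPolynomial.support_nonempty.2 hf) (fun s => s.sum fun _ e => e)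
      exact ⟨s, hs, h2.symm⟩
    have hqs : coeff s q ≠ 0 := by
      rw [hq, coeff_homogeneousComponent, if_pos (by rw [← hs']; rfl)]
      exact mem_support_iff.1 hs
    have hsd : s.degree = f.totalDegree := hs'
    have hmono : ∀ m : Option σ →₀ ℕ, (m.prod fun v k => (v.elim 1 X : MvPolynomial σ K) ^ k)
        = monomial m.some 1 := by
      intro m
      rw [Finsupp.prod_option_index]
      · rw [monomial_eq]; simp
      · simp
      · intro o m1 m2; rw [pow_add]
    intro h0
    have hsum : aeval (fun v : Option σ => v.elim 1 (X : σ → MvPolynomial σ K)) q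
        = ∑ m ∈ q.support, monomial m.some (coeff m q) := by
      rw [aeval_def, eval₂_eq]
      refine Finset.sum_congr rfl fun m _ => ?_
      have := hmono m
      rw [Finsupp.prod] at this
      rw [this, algebraMap_eq, C_mul_monomial, mul_one]
    have h1 := congrArg (coeff s.some) h0
    rw [hsum, coeff_sum, coeff_zero, Finset.sum_eq_single s] at h1
    · rw [coeff_monomial, if_pos rfl] at h1
      exact hqs h1
    · intro m hm hms
      rw [coeff_monomial, if_neg]
      intro hsome
      apply hms
      have hmd : m.degree = f.totalDegree := by
        by_contra hne
        apply mem_support_iff.1 hm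
        rw [hq, coeff_homogeneousComponent, if_neg hne]
      have hdeg : ∀ m : Option σ →₀ ℕ, m.degree = m none + m.some.degree := by
        intro m
        exact Finsupp.sum_option_index m (fun _ k => k) (fun _ => rfl) (fun _ _ _ => rfl)
      have h2 := hdeg m
      have h3 := hdeg s
      rw [hsome] at h2
      ext v
      rcases v with _ | i
      · omega
      · exact DFunLike.congr_fun hsome i
    · intro hns
      exact absurd (mem_support_iff.2 hqs) hns
  · refine (totalDegree_aeval_le _ ?_ q).trans ?_
    · rintro (_ | i) <;> simp
    · exact (homogeneousComponent_isHomogeneous _ _).totalDegree_le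
  · intro a
    rw [topc]
    have : (aeval a).comp (aeval (fun v : Option σ => v.elim 1 (X : σ → MvPolynomial σ K))) =
      (aeval (fun v : Option σ => v.elim 1 a) : MvPolynomial (Option σ) K →ₐ[K] K) := by
      apply MvPolynomial.algHom_ext
      rintro (_ | i) <;> simp
    exact DFunLike.congr_fun this q

lemma natDegree_psi_plane (a b : σ → K) (f : MvPolynomial (Option σ) K) (hu : topc a f ≠ 0) :
    (psi (plane a b f)).natDegree = f.totalDegree := by
  rw [psi_plane]
  apply le_antisymm
  · exact Polynomial.natDegree_map_le.trans (shear_wt a f).natDegree_le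
  · apply Polynomial.le_natDegree_of_ne_zero
    have h1 : (Polynomial.mapAlgHom (line b) (optionEquivLeft K σ (shear a f))).coeff f.totalDegree
        = line b ((optionEquivLeft K σ (shear a f)).coeff f.totalDegree) :=
      Polynomial.coeff_map _ _
    rw [h1, shear_coeff, ← algebraMap_eq, AlgHom.commutes]
    exact Polynomial.C_ne_zero.2 hu

lemma plane_totalDegree_pos (a b : σ → K) (f : MvPolynomial (Option σ) K) (hD : 0 < f.totalDegree)
    (hu : topc a f ≠ 0) : 0 < (plane a b f).totalDegree := by
  rw [Nat.pos_iff_ne_zero]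
  intro h
  rw [totalDegree_eq_zero_iff_eq_C] at h
  have h1 := natDegree_psi_plane a b f hu
  rw [h, ← algebraMap_eq, AlgHom.commutes] at h1
  have h2 : ((algebraMap K (Polynomial (Polynomial K))) (coeff 0 (plane a b f))).natDegree = 0 :=
    Polynomial.natDegree_C _
  omega

lemma plane_indec (a b : σ → K) (f : MvPolynomial (Option σ) K) (hD : 0 < f.totalDegree)
    (hu : topc a f ≠ 0)
    (hno : ∀ m ∈ Finset.Icc 2 f.totalDegree, ∀ (G : Polynomial K) (k : MvPolynomial (Fin 2) K),
        G.natDegree = m → plane a b f ≠ Polynomial.aeval k G) :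
    (plane a b f).Indecomposable := by
  refine ⟨plane_totalDegree_pos a b f hD hu, ?_⟩
  rintro ⟨g, h, hg, hf⟩
  refine hno g.natDegree (Finset.mem_Icc.2 ⟨hg, ?_⟩) g h rfl hf
  have h1 := natDegree_psi_plane a b f hu
  rw [hf, ← Polynomial.aeval_algHom_apply, natDegree_aeval] at h1
  exact Nat.le_of_dvd hD ⟨_, h1.symm⟩

end

lemma count_aux {T : Type*} [Fintype T] (Q : T × T → Prop) (Z : T → Prop) (c η : ℝ)
    (hη : 0 ≤ η)
    (hZ : (Nat.card {r : T // Z r} : ℝ) ≤ c * (Nat.card T : ℝ))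
    (hr : ∀ r, ¬ Z r → (Nat.card {s : T // ¬ Q (r, s)} : ℝ) ≤ η * (Nat.card T : ℝ)) :
    (1 - (c + η)) * (Nat.card T : ℝ) ^ 2 ≤ (Nat.card {p : T × T // Q p} : ℝ) := by
  classical
  simp only [Nat.card_eq_fintype_card, Fintype.card_subtype] at *
  set t : ℝ := (Fintype.card T : ℝ) with ht
  have ht0 : 0 ≤ t := Nat.cast_nonneg _
  have h1 : ((Finset.univ.filter fun p : T × T => Q p).card : ℝ) +
      ((Finset.univ.filter fun p : T × T => ¬ Q p).card : ℝ) = t ^ 2 := by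
    rw [ht]
    have := Finset.card_filter_add_card_filter_not (s := (Finset.univ : Finset (T × T))) (p := Q)
    rw [Finset.card_univ, Fintype.card_prod, ← pow_two] at this
    exact_mod_cast this
  have h2 : ((Finset.univ.filter fun p : T × T => ¬ Q p).card : ℝ) =
      ∑ r : T, ((Finset.univ.filter fun s : T => ¬ Q (r, s)).card : ℝ) := by
    simp only [Finset.card_filter]
    push_cast
    rw [Fintype.sum_prod_type]
  have h3 : ∀ r : T, ((Finset.univ.filter fun s : T => ¬ Q (r, s)).card : ℝ) ≤
      (if Z r then 1 else 0) * t + η * t := by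
    intro r
    by_cases hz : Z r
    · rw [if_pos hz, one_mul]
      have : ((Finset.univ.filter fun s : T => ¬ Q (r, s)).card : ℝ) ≤ t := by
        rw [ht]; exact_mod_cast Finset.card_le_univ _
      nlinarith [mul_nonneg hη ht0]
    · rw [if_neg hz, zero_mul, zero_add]
      exact hr r hz
  have h4 := Finset.sum_le_sum (s := Finset.univ) fun r _ => h3 r
  rw [← h2, Finset.sum_add_distrib, ← Finset.sum_mul, Finset.sum_const, Finset.card_univ,
    Finset.sum_boole, nsmul_eq_mul, ← ht] at h4
  nlinarith [mul_le_mul_of_nonneg_right hZ ht0]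

end RPI

/-- **Restriction to a pseudorandom plane preserves indecomposability.**
Let `F` be a finite field (of prime-power size `q`) of characteristic at least
`d(d−1)+1`, and let `H : T → Fⁿ` be a hitting set generator with density `1−δ` for
`n`-variate polynomials of degree at most `2d−1` over `F`. Let `f ∈ F[x₁,…,xₙ,y]` be an
indecomposable polynomial of total degree at most `d`. For `(r,s) ∈ T×T`, let
`a = H(r)`, `b = H(s)`, and `F_{r,s} = f(b₁x+a₁y, …, bₙx+aₙy, y) ∈ F[x,y]`. Then the
number of pairs `(r,s)` for which `F_{r,s}` is indecomposable over `F` is at least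
`(1 − 2^(d−1)·δ)·|T|²`. -/
theorem restriction_preserves_indecomposability
    (F : Type) [Field F] [Fintype F] (n d : ℕ) (hn : 1 ≤ n) (hd : 1 ≤ d)
    (hchar : d * (d - 1) + 1 ≤ ringChar F)
    (δ : ℝ) (hδ : 0 ≤ δ)
    (T : Type) [Finite T] [Nonempty T] (H : T → Fin n → F)
    (hH : ∀ P : MvPolynomial (Fin n) F, P ≠ 0 → P.totalDegree ≤ 2 * d - 1 →
      (Nat.card {s : T // eval (H s) P = 0} : ℝ) ≤ δ * (Nat.card T : ℝ))
    (f : MvPolynomial (Option (Fin n)) F)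
    (hdeg : f.totalDegree ≤ d) (hind : f.Indecomposable) :
    (1 - 2 ^ (d - 1) * δ) * (Nat.card T : ℝ) ^ 2 ≤
      (Nat.card {p : T × T //
        (aeval (fun v : Option (Fin n) => v.elim (X 1)
            (fun i => C (H p.2 i) * X 0 + C (H p.1 i) * X 1)) f
          : MvPolynomial (Fin 2) F).Indecomposable} : ℝ) := by
  classical
  have := Fintype.ofFinite T
  have hD : 0 < f.totalDegree := hind.1
  have hf0 : f ≠ 0 := by
    rintro rfl; simp at hD
  obtain ⟨P0, hP0, hP0d, hP0e⟩ := RPI.exists_topPoly f hf0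
  set t : ℝ := (Nat.card T : ℝ) with ht
  have ht0 : 0 ≤ t := Nat.cast_nonneg _
  have hmain : (1 - (δ + ((f.totalDegree - 1 : ℕ) : ℝ) * δ)) * t ^ 2 ≤
      (Nat.card {p : T × T // (RPI.plane (H p.1) (H p.2) f).Indecomposable} : ℝ) := by
    refine RPI.count_aux (fun p : T × T => (RPI.plane (H p.1) (H p.2) f).Indecomposable)
      (fun r => eval (H r) P0 = 0) δ _ (mul_nonneg (Nat.cast_nonneg _) hδ)
      (hH P0 hP0 (by omega)) ?_
    intro r hr
    have hu : RPI.topc (H r) f ≠ 0 := by rw [← hP0e]; exact hr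
    have hex : ∀ m ∈ Finset.Icc 2 f.totalDegree, ∃ P : MvPolynomial (Fin n) F, P ≠ 0 ∧
        P.totalDegree ≤ f.totalDegree ∧
        ∀ b : Fin n → F, eval b P ≠ 0 → ∀ (G : Polynomial F) (k : MvPolynomial (Fin 2) F),
          G.natDegree = m → RPI.plane (H r) b f ≠ Polynomial.aeval k G := by
      intro m hm
      rw [Finset.mem_Icc] at hm
      refine RPI.det_main (H r) f hD hind.2 hu m hm.1 ?_
      intro h0
      rw [CharP.cast_eq_zero_iff F (ringChar F)] at h0
      have h1 := Nat.le_of_dvd (by omega) h0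
      have h2 : d * 1 ≤ d * (d - 1) := Nat.mul_le_mul_left _ (by omega)
      omega
    choose! P hP1 hP2 hP3 using hex
    have hsub : (Finset.univ.filter fun s : T => ¬ (RPI.plane (H r) (H s) f).Indecomposable) ⊆
        (Finset.Icc 2 f.totalDegree).biUnion
          (fun m => Finset.univ.filter fun s : T => eval (H s) (P m) = 0) := by
      intro s hs
      rw [Finset.mem_filter] at hs
      by_contra hcon
      simp only [Finset.mem_biUnion, Finset.mem_filter, Finset.mem_univ, true_and, not_exists,
        not_and] at hcon
      exact hs.2 (RPI.plane_indec (H r) (H s) f hD hu fun m hm => hP3 m hm (H s) (hcon m hm))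
    have hc1 := (Finset.card_le_card hsub).trans Finset.card_biUnion_le
    have hc2 : ((Finset.univ.filter fun s : T =>
        ¬ (RPI.plane (H r) (H s) f).Indecomposable).card : ℝ) ≤
        ∑ m ∈ Finset.Icc 2 f.totalDegree,
          ((Finset.univ.filter fun s : T => eval (H s) (P m) = 0).card : ℝ) := by
      exact_mod_cast hc1
    have hc3 : ∀ m ∈ Finset.Icc 2 f.totalDegree,
        ((Finset.univ.filter fun s : T => eval (H s) (P m) = 0).card : ℝ) ≤ δ * t := by
      intro m hm
      have := hH (P m) (hP1 m hm) ((hP2 m hm).trans (by omega))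
      rwa [Nat.card_eq_fintype_card, Fintype.card_subtype] at this
    have hc4 := hc2.trans (Finset.sum_le_sum hc3)
    rw [Finset.sum_const, Nat.card_Icc, nsmul_eq_mul, ← mul_assoc] at hc4
    rw [Nat.card_eq_fintype_card, Fintype.card_subtype]
    have : f.totalDegree + 1 - 2 = f.totalDegree - 1 := by omega
    rwa [this] at hc4
  refine le_trans ?_ hmain
  apply mul_le_mul_of_nonneg_right _ (sq_nonneg t)
  have hle : (1 + ((f.totalDegree - 1 : ℕ) : ℝ)) ≤ 2 ^ (d - 1) := by
    have : 1 + (f.totalDegree - 1) ≤ 2 ^ (d - 1) := by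
      have := Nat.lt_two_pow_self (n := d - 1)
      omega
    exact_mod_cast this
  nlinarith [mul_le_mul_of_nonneg_right hle hδ]
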